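/- (Achievability in Theorem 1, case α ≥ z/τ.) Let T ≥ 2, τ ∈ {1,…,T}, z ∈ {1,…,τ−1}, and let α ∈ [0,1] with α ≥ z/τ. Then there exist a finite probability space, a random variable F with H(F) > 0, and random variables M_1,…,M_T, each M_t a deterministic function of F alone (no local randomness, ρ = 0), such that: (i) H(F | M_S) = 0 for every S ⊆ {1,…,T} with |S| ≥ τ; (ii) I(F; M_S) ≤ α·H(F) for every S ⊆ {1,…,T} with |S| ≤ z; (iii) I(F; M_S)/H(F) depends only on |S| (leakage symmetry); and (iv) H(M_t) = H(F)/τ for every t ∈ {1,…,T}. -/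

import Mathlib

/-!
The scheme is a Reed–Solomon code used without randomness. For a prime `q ≥ T` the source `F` is a
uniformly random polynomial of degree `< τ` over `ZMod q`, and the share `M_t` is its value at the
`t`-th of `T` distinct points of `ZMod q`.

A linear map of a uniformly distributed vector is uniform on its range, so its entropy is
`rank * log₂ q` (`ent_linearMap`). By Lagrange interpolation, evaluation at `s` distinct points
has rank `min s τ` (`finrank_range_evalMap`), whence `H(M_S) = min |S| τ * log₂ q`, while
`H(F) = τ * log₂ q`. Since the shares are functions of `F`, `I(F; M_S) = H(M_S)`, and
all the requirements can be read off from these two values.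
-/

open scoped BigOperators
open Classical

noncomputable section

/-- Probability of an event `A` under the probability mass function `p` on a finite
sample space `Ω`. -/
def prb {Ω : Type} [Fintype Ω] (p : Ω → ℝ) (A : Set Ω) : ℝ :=
  ∑ ω, if ω ∈ A then p ω else 0

/-- Shannon entropy (in bits, base-2 logarithm) of a random variable `X` defined on a
finite sample space with probability mass function `p`, with the convention
`0 * log 0 = 0`. -/
def ent {Ω V : Type} [Fintype Ω] [Fintype V] (p : Ω → ℝ) (X : Ω → V) : ℝ :=
  -∑ v, prb p {ω | X ω = v} * Real.logb 2 (prb p {ω | X ω = v})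

/-- Conditional Shannon entropy `H(X | Y) = H(X, Y) - H(Y)`. -/
def condEnt {Ω V W : Type} [Fintype Ω] [Fintype V] [Fintype W]
    (p : Ω → ℝ) (X : Ω → V) (Y : Ω → W) : ℝ :=
  ent p (fun ω => (X ω, Y ω)) - ent p Y

/-- Mutual information `I(X ; Y) = H(X) + H(Y) - H(X, Y)`. -/
def mutInf {Ω V W : Type} [Fintype Ω] [Fintype V] [Fintype W]
    (p : Ω → ℝ) (X : Ω → V) (Y : Ω → W) : ℝ :=
  ent p X + ent p Y - ent p (fun ω => (X ω, Y ω))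

/-- The tuple of shares `M_S = (M_t)_{t ∈ S}` viewed as a single random variable. -/
def shares {Ω : Type} {T : ℕ} {χ : Fin T → Type} (M : ∀ t, Ω → χ t)
    (S : Finset (Fin T)) : Ω → (∀ t : S, χ t.1) :=
  fun ω t => M t.1 ω

/-- The properties required of a coding scheme achieving the optimal individual share
size in Theorem 1 for the case `α ≥ z/τ`: `p` is a probability mass function,
`H(F) > 0`, each share is a deterministic function of `F` alone (no local randomness),
recoverability from any `τ` shares, `(α, z)`-privacy, leakage symmetry, and
`H(M_t) = H(F)/τ` for every `t`. -/
def AchievesOptimalSchemeNoRandomness (T τ z : ℕ) (α : ℝ) (Ω : Type) [Fintype Ω]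
    (p : Ω → ℝ) (𝔽 : Type) [Fintype 𝔽] (F : Ω → 𝔽)
    (𝕄 : Type) [Fintype 𝕄] (M : Fin T → Ω → 𝕄) : Prop :=
  (∀ ω, 0 ≤ p ω) ∧ (∑ ω, p ω = 1) ∧ 0 < ent p F ∧
  (∀ t : Fin T, ∃ g : 𝔽 → 𝕄, ∀ ω, M t ω = g (F ω)) ∧
  (∀ S : Finset (Fin T), τ ≤ S.card → condEnt p F (shares M S) = 0) ∧
  (∀ S : Finset (Fin T), S.card ≤ z → mutInf p F (shares M S) ≤ α * ent p F) ∧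
  (∀ t : ℕ, 1 ≤ t → t ≤ T → ∃ C : ℝ, 0 ≤ C ∧
    ∀ S : Finset (Fin T), S.card = t → mutInf p F (shares M S) = C * ent p F) ∧
  (∀ t : Fin T, ent p (M t) = ent p F / (τ : ℝ))

/-- Under the uniform distribution, a random variable all of whose nonempty fibres have the same
size `k` is uniform on its range, so its entropy is `log₂ (|Ω| / k)`. -/
lemma ent_of_fibers {Ω V : Type} [Fintype Ω] [Fintype V] [Nonempty Ω] (X : Ω → V) (k : ℕ)
    (hk : ∀ ω, (Finset.univ.filter fun ω' => X ω' = X ω).card = k) :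
    ent (fun _ : Ω => (Fintype.card Ω : ℝ)⁻¹) X = Real.logb 2 ((Fintype.card Ω : ℝ) / k) := by
  have hN : (Fintype.card Ω : ℝ) ≠ 0 := by
    exact_mod_cast Fintype.card_ne_zero
  have hP : ∀ v, prb (fun _ : Ω => (Fintype.card Ω : ℝ)⁻¹) {ω | X ω = v}
      = ((Finset.univ.filter fun ω' => X ω' = v).card : ℝ) * (Fintype.card Ω : ℝ)⁻¹ := by
    intro v
    simp [prb, ← Finset.sum_filter]
  have hsum : ∑ v, ((Finset.univ.filter fun ω' => X ω' = v).card : ℝ) = Fintype.card Ω := by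
    have h := Finset.card_eq_sum_card_fiberwise (f := X) (s := Finset.univ)
      (t := Finset.univ) (by simp)
    rw [Finset.card_univ] at h
    rw [h]
    push_cast
    rfl
  have hterm : ∀ v, ((Finset.univ.filter fun ω' => X ω' = v).card : ℝ) * (Fintype.card Ω : ℝ)⁻¹ *
      Real.logb 2 (((Finset.univ.filter fun ω' => X ω' = v).card : ℝ) * (Fintype.card Ω : ℝ)⁻¹)
      = ((Finset.univ.filter fun ω' => X ω' = v).card : ℝ) *
        ((Fintype.card Ω : ℝ)⁻¹ * Real.logb 2 ((k : ℝ) * (Fintype.card Ω : ℝ)⁻¹)) := by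
    intro v
    by_cases hv : ∃ ω, X ω = v
    · obtain ⟨ω, rfl⟩ := hv
      rw [hk ω, mul_assoc]
    · have : (Finset.univ.filter fun ω' => X ω' = v) = ∅ := by
        apply Finset.filter_eq_empty_iff.2
        intro ω _ h
        exact hv ⟨ω, h⟩
      simp [this]
  unfold ent
  simp only [hP, hterm]
  rw [← Finset.sum_mul, hsum, ← mul_assoc, mul_inv_cancel₀ hN, one_mul, ← Real.logb_inv]
  congr 1
  rw [mul_inv, inv_inv, div_eq_mul_inv, mul_comm]

lemma ent_of_injective {Ω V : Type} [Fintype Ω] [Fintype V] [Nonempty Ω] (X : Ω → V)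
    (hX : Function.Injective X) :
    ent (fun _ : Ω => (Fintype.card Ω : ℝ)⁻¹) X = Real.logb 2 (Fintype.card Ω) := by
  have h := ent_of_fibers X 1 (by
    intro ω
    rw [Finset.card_eq_one]
    exact ⟨ω, by ext; simp [hX.eq_iff]⟩)
  simpa using h

/-- A linear function of a uniform vector over a finite field `K` has entropy
`rank * log₂ |K|`: each nonempty fibre is a coset of the kernel. -/
lemma ent_linearMap {K E W : Type} [Field K] [Fintype K] [AddCommGroup E] [Module K E] [Fintype E]
    [AddCommGroup W] [Module K W] [Fintype W] (L : E →ₗ[K] W) :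
    ent (fun _ : E => (Fintype.card E : ℝ)⁻¹) L
      = Module.finrank K (LinearMap.range L) * Real.logb 2 (Fintype.card K) := by
  have hq : (Fintype.card K : ℝ) ≠ 0 := by
    exact_mod_cast Fintype.card_ne_zero
  have hker : (Finset.univ.filter fun x => L x = 0).card
      = Fintype.card K ^ Module.finrank K (LinearMap.ker L) := by
    rw [← Module.card_eq_pow_finrank (K := K) (V := LinearMap.ker L), Fintype.card_subtype]
    simp only [LinearMap.mem_ker]
  rw [ent_of_fibers L (Fintype.card K ^ Module.finrank K (LinearMap.ker L)),
    Module.card_eq_pow_finrank (K := K) (V := E), ← L.finrank_range_add_finrank_ker]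
  · push_cast
    rw [pow_add, mul_div_cancel_right₀ _ (pow_ne_zero _ hq), Real.logb_pow]
  · intro x
    rw [← hker]
    exact AddMonoidHom.card_fiber_eq_of_mem_range L ⟨x, rfl⟩ ⟨0, map_zero L⟩

/-- Evaluation of polynomials of degree `< n` at the nodes `v t`, `t ∈ S`. -/
def evalMap {K ι : Type} [Field K] (n : ℕ) (v : ι → K) (S : Finset ι) :
    Polynomial.degreeLT K n →ₗ[K] (S → K) :=
  LinearMap.pi fun t => (Polynomial.leval (v t)).comp (Polynomial.degreeLT K n).subtype

lemma evalMap_apply {K ι : Type} [Field K] (n : ℕ) (v : ι → K) (S : Finset ι)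
    (f : Polynomial.degreeLT K n) (t : S) : evalMap n v S f t = f.1.eval (v t) := rfl

/-- For at least `n` distinct nodes the evaluation map is injective; for at most `n` it is
surjective by Lagrange interpolation. -/
lemma finrank_range_evalMap {K ι : Type} [Field K] (n : ℕ) (v : ι → K)
    (hv : Function.Injective v) (S : Finset ι) :
    Module.finrank K (LinearMap.range (evalMap n v S)) = min S.card n := by
  rcases le_total n S.card with h | h
  · have hinj : Function.Injective (evalMap n v S) := by
      intro f g hfg
      have hdeg : ∀ f : Polynomial.degreeLT K n, f.1.degree < S.card := fun f =>
        (Polynomial.mem_degreeLT.1 f.2).trans_le (by exact_mod_cast h)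
      apply Subtype.ext
      exact Polynomial.eq_of_degrees_lt_of_eval_index_eq S hv.injOn (hdeg f) (hdeg g)
        fun t ht => congrFun hfg ⟨t, ht⟩
    rw [LinearMap.finrank_range_of_inj hinj, (Polynomial.degreeLTEquiv K n).finrank_eq,
      Module.finrank_fin_fun, min_eq_right h]
  · have hsurj : Function.Surjective (evalMap n v S) := by
      intro r
      let r' : ι → K := fun t => if ht : t ∈ S then r ⟨t, ht⟩ else 0
      refine ⟨⟨Lagrange.interpolate S v r', Polynomial.mem_degreeLT.2 ?_⟩, ?_⟩
      · exact (Lagrange.degree_interpolate_lt r' hv.injOn).trans_le (by exact_mod_cast h)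
      · ext t
        rw [evalMap_apply]
        simp only [Lagrange.eval_interpolate_at_node r' hv.injOn t.2]
        simp [r']
    rw [LinearMap.range_eq_top.2 hsurj, finrank_top, Module.finrank_fintype_fun_eq_card,
      Fintype.card_coe, min_eq_left h]

/-- Achievability in Theorem 1, case `α ≥ z/τ`: there exists a finite
coding scheme with no local randomness whose shares have entropy `H(F)/τ`. -/
theorem achievability_large_alpha
    (T τ z : ℕ) (hT : 2 ≤ T) (hτ1 : 1 ≤ τ) (hτT : τ ≤ T) (hz1 : 1 ≤ z) (hzτ : z < τ)
    (α : ℝ) (hα0 : 0 ≤ α) (hα1 : α ≤ 1) (hα : (z : ℝ) / (τ : ℝ) ≤ α) :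
    ∃ (Ω : Type) (iΩ : Fintype Ω) (p : Ω → ℝ)
      (𝔽 : Type) (i𝔽 : Fintype 𝔽) (F : Ω → 𝔽)
      (𝕄 : Type) (i𝕄 : Fintype 𝕄) (M : Fin T → Ω → 𝕄),
      @AchievesOptimalSchemeNoRandomness T τ z α Ω iΩ p 𝔽 i𝔽 F 𝕄 i𝕄 M := by
  obtain ⟨q, hqT, hq⟩ := Nat.exists_infinite_primes T
  have : Fact q.Prime := ⟨hq⟩
  have hτ0 : (0 : ℝ) < τ := by exact_mod_cast hτ1
  have hlog : 0 < Real.logb 2 (Fintype.card (ZMod q)) := by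
    rw [ZMod.card]
    exact Real.logb_pos (by norm_num) (by exact_mod_cast hq.one_lt)
  obtain ⟨v⟩ : Nonempty (Fin T ↪ ZMod q) :=
    Function.Embedding.nonempty_of_card_le (by simpa [ZMod.card] using hqT)
  let E := Polynomial.degreeLT (ZMod q) τ
  have : Finite E := Finite.of_equiv _ (Polynomial.degreeLTEquiv (ZMod q) τ).symm.toEquiv
  let iE : Fintype E := Fintype.ofFinite E
  let p : E → ℝ := fun _ => (Fintype.card E : ℝ)⁻¹
  let M : Fin T → E → ZMod q := fun t f => f.1.eval (v t)
  have hcard : Real.logb 2 (Fintype.card E) = τ * Real.logb 2 (Fintype.card (ZMod q)) := by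
    rw [Module.card_eq_pow_finrank (K := ZMod q) (V := E),
      (Polynomial.degreeLTEquiv (ZMod q) τ).finrank_eq, Module.finrank_fin_fun]
    push_cast
    rw [Real.logb_pow]
  have hF : ent p (id : E → E) = τ * Real.logb 2 (Fintype.card (ZMod q)) := by
    rw [← hcard]
    exact ent_of_injective _ Function.injective_id
  have hjoint : ∀ S : Finset (Fin T), ent p (fun f : E => (id f, shares M S f))
      = τ * Real.logb 2 (Fintype.card (ZMod q)) := by
    intro S
    rw [← hcard]
    exact ent_of_injective _ fun f g h => (Prod.ext_iff.1 h).1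
  have hM : ∀ S : Finset (Fin T), ent p (shares M S)
      = (min S.card τ : ℕ) * Real.logb 2 (Fintype.card (ZMod q)) := by
    intro S
    rw [← finrank_range_evalMap τ v v.injective S]
    exact ent_linearMap (evalMap τ v S)
  have hI : ∀ S : Finset (Fin T), mutInf p (id : E → E) (shares M S)
      = ((min S.card τ : ℕ) / τ : ℝ) * ent p (id : E → E) := by
    intro S
    unfold mutInf
    rw [hjoint, hF, hM]
    field_simp
    ring
  refine ⟨E, iE, p, E, iE, id, ZMod q, inferInstance, M, ?_, ?_, ?_, ?_, ?_, ?_, ?_, ?_⟩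
  · intro f
    positivity
  · have : (Fintype.card E : ℝ) ≠ 0 := by
      exact_mod_cast Fintype.card_ne_zero
    simp [p, this]
  · rw [hF]
    positivity
  · exact fun t => ⟨M t, fun _ => rfl⟩
  · intro S hS
    unfold condEnt
    rw [hjoint, hM, min_eq_right hS, sub_self]
  · intro S hS
    rw [hI]
    refine mul_le_mul_of_nonneg_right (le_trans ?_ hα) (by rw [hF]; positivity)
    gcongr
    exact (min_le_left _ _).trans hS
  · intro t _ _
    refine ⟨(min t τ : ℕ) / τ, by positivity, ?_⟩
    rintro S rfl
    exact hI S
  · intro t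
    -- A single share is a surjective linear functional: constants already attain every value.
    have h : ent p (M t) = _ :=
      ent_linearMap ((Polynomial.leval (v t)).comp (Polynomial.degreeLT (ZMod q) τ).subtype)
    have hr : LinearMap.range
        ((Polynomial.leval (v t)).comp (Polynomial.degreeLT (ZMod q) τ).subtype) = ⊤ := by
      rw [LinearMap.range_eq_top]
      intro c
      refine ⟨⟨Polynomial.C c, Polynomial.mem_degreeLT.2 ?_⟩, by simp⟩
      exact Polynomial.degree_C_le.trans_lt (by exact_mod_cast hτ1)
    rw [h, hr, hF, finrank_top, Module.finrank_self]
    field_simp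
    simp

end
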